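/- arXiv:2511.08926 — 2 statements merged into one kernel-verified Lean document; each statement's English description precedes it below -/
import Mathlib

section
/- Let N ≥ 1 and k ≥ 1. For each agent i ∈ Fin N, let O i and X i be nonempty compact metric spaces equipped with their Borel σ-algebras, let μ be a Borel probability measure on the product space Π i, O i (the common prior over observation profiles), let w i ∈ stdSimplex ℝ (Fin k) be a fixed preference vector (commonly observed by all agents), and let f i : (Π j, X j) → (Fin k → ℝ) be continuous (the vectorised reward of agent i). For a profile κ of behavioral strategies (κ j a Markov kernel from O j to X j for each j), define the ex-ante payoff of agent i as J i κ = ∫ o, (∫ x, (∑ m, w i m * f i x m) ∂(Measure.pi (fun j => κ j (o j)))) ∂μ. Then a Bayesian Nash equilibrium exists: there is a profile κ* of Markov kernels such that for every agent i and every Markov kernel τ from O i to X i, J i (Function.update κ* i τ) ≤ J i κ*. -/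
def SDom {n : ℕ} {V : Type*} (r : Fin n → V → ℕ) (S : Finset V) : Prop :=
  ∀ y : V, ∃ i, ∀ s ∈ S, r i y ≤ r i s

theorem SDom.mono {n : ℕ} {V : Type*} {r : Fin n → V → ℕ} {S S' : Finset V} (h : S ⊆ S')
    (hS : SDom r S') : SDom r S := fun y => by
  obtain ⟨i, hi⟩ := hS y
  exact ⟨i, fun s hs => hi s (h hs)⟩

/-- non-rainbow rooms have an even number of doors -/
theorem room_even {n : ℕ} {V : Type*} [DecidableEq V] (c : V → Fin n) (i0 : Fin n)
    (R : Finset V) (hR : R.card = n) (hnr : R.image c ≠ Finset.univ) :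
    Even (R.filter (fun y => (R.erase y).image c = Finset.univ.erase i0)).card := by
  classical
  by_cases hex : ∃ y0 ∈ R, (R.erase y0).image c = Finset.univ.erase i0
  · obtain ⟨y0, hy0, h0⟩ := hex
    have hinj : Set.InjOn c (R.erase y0 : Finset V) := by
      apply Finset.card_image_iff.mp
      rw [h0, Finset.card_erase_of_mem (Finset.mem_univ _), Finset.card_erase_of_mem hy0, hR]
      simp
    have hc0 : c y0 ≠ i0 := by
      intro h
      apply hnr
      rw [← Finset.insert_erase hy0, Finset.image_insert, h0, h]
      exact Finset.insert_erase (Finset.mem_univ _)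
    have : c y0 ∈ (R.erase y0).image c := by rw [h0]; simp [hc0]
    obtain ⟨y1, hy1, h1⟩ := Finset.mem_image.mp this
    have hy1' := Finset.mem_erase.mp hy1
    have : R.filter (fun y => (R.erase y).image c = Finset.univ.erase i0) = {y0, y1} := by
      ext y
      simp only [Finset.mem_filter, Finset.mem_insert, Finset.mem_singleton]
      constructor
      · rintro ⟨hy, h⟩
        by_contra! hne
        have hyi : c y ∈ (R.erase y0).image c :=
          Finset.mem_image_of_mem _ (Finset.mem_erase.mpr ⟨hne.1, hy⟩)
        rw [h0, ← h] at hyi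
        obtain ⟨z, hz, hzc⟩ := Finset.mem_image.mp hyi
        have hz' := Finset.mem_erase.mp hz
        by_cases hz0 : z = y0
        · have := hinj (Finset.mem_coe.mpr hy1) (Finset.mem_coe.mpr (Finset.mem_erase.mpr ⟨hne.1, hy⟩))
            (by rw [h1, ← hz0, hzc])
          exact hne.2 this.symm
        · have := hinj (Finset.mem_coe.mpr (Finset.mem_erase.mpr ⟨hz0, hz'.2⟩))
            (Finset.mem_coe.mpr (Finset.mem_erase.mpr ⟨hne.1, hy⟩)) hzc
          exact hz'.1 this
      · rintro (rfl | rfl)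
        · exact ⟨hy0, h0⟩
        · refine ⟨hy1'.2, ?_⟩
          rw [← h0]
          ext k
          simp only [Finset.mem_image, Finset.mem_erase]
          constructor
          · rintro ⟨z, ⟨hz, hzR⟩, rfl⟩
            by_cases hz0 : z = y0
            · exact ⟨y, ⟨hy1'.1, hy1'.2⟩, by rw [h1, hz0]⟩
            · exact ⟨z, ⟨hz0, hzR⟩, rfl⟩
          · rintro ⟨z, ⟨hz, hzR⟩, rfl⟩
            by_cases hz0 : z = y
            · exact ⟨y0, ⟨fun h => hy1'.1 h.symm, hy0⟩, by rw [← h1, hz0]⟩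
            · exact ⟨z, ⟨hz0, hzR⟩, rfl⟩
    rw [this, Finset.card_pair (fun h => hy1'.1 h.symm)]
    exact even_two
  · have : R.filter (fun y => (R.erase y).image c = Finset.univ.erase i0) = ∅ := by
      apply Finset.filter_eq_empty_iff.mpr
      intro y hy h
      exact hex ⟨y, hy, h⟩
    rw [this]; simp

/-- outer doors -/
theorem outer_one {n : ℕ} {V : Type*} [Fintype V] [DecidableEq V] (r : Fin n → V → ℕ)
    (hr : ∀ i, Function.Injective (r i)) (e : Fin n → V) (he : Function.Injective e)
    (hmin : ∀ i v, r i (e i) ≤ r i v)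
    (hbig : ∀ i j, i ≠ j → ∀ v, v ∉ Set.range e → r i v < r i (e j)) (k : Fin n)
    [DecidablePred (SDom r)] :
    (Finset.univ.filter (fun y => y ∉ (Finset.univ.erase k).image e ∧
      SDom r (insert y ((Finset.univ.erase k).image e)))).card = 1 := by
  classical
  set S := (Finset.univ.erase k).image e with hS
  have hek : e k ∉ S := by
    simp only [hS, Finset.mem_image, Finset.mem_erase, not_exists]
    rintro x ⟨⟨h, -⟩, h'⟩
    exact h (he h')
  have heS : ∀ j, j ≠ k → e j ∈ S := fun j hj => Finset.mem_image_of_mem _ (by simp [hj])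
  obtain ⟨y, hy, hymax⟩ := Finset.exists_max_image Sᶜ (r k) ⟨e k, by simpa using hek⟩
  have hyS : y ∉ S := by simpa using hy
  rw [Finset.card_eq_one]
  refine ⟨y, ?_⟩
  ext z
  simp only [Finset.mem_filter, Finset.mem_univ, true_and, Finset.mem_singleton]
  constructor
  · rintro ⟨hz, hd⟩
    obtain ⟨i, hi⟩ := hd y
    by_cases hik : i = k
    · subst hik
      exact hr _ (le_antisymm (hymax z (by simpa using hz)) (hi z (by simp)))
    · have := hi (e i) (by simp [heS i hik])
      exact absurd (hr _ (le_antisymm this (hmin i y))) (fun h => hyS (h ▸ heS i hik))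
  · rintro rfl
    refine ⟨hyS, fun x => ?_⟩
    by_cases hx : x ∈ S
    · obtain ⟨j, hj, rfl⟩ := Finset.mem_image.mp hx
      exact ⟨j, fun s _ => hmin j s⟩
    · refine ⟨k, fun s hs => ?_⟩
      rcases Finset.mem_insert.mp hs with rfl | hs
      · exact hymax x (by simpa using hx)
      · obtain ⟨j, hj, rfl⟩ := Finset.mem_image.mp hs
        have hjk := (Finset.mem_erase.mp hj).1
        by_cases hxr : x ∈ Set.range e
        · obtain ⟨l, rfl⟩ := hxr
          have : l = k := by
            by_contra h
            exact hx (heS l h)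
          subst this
          exact hmin _ _
        · exact (hbig k j (Ne.symm hjk) x hxr).le

/-- inner doors -/
theorem inner_two {n : ℕ} {V : Type*} [Fintype V] [DecidableEq V] (r : Fin n → V → ℕ)
    (hr : ∀ i, Function.Injective (r i)) (e : Fin n → V)
    (hbig : ∀ i j, i ≠ j → ∀ v, v ∉ Set.range e → r i v < r i (e j))
    [DecidablePred (SDom r)] (S : Finset V) (hcard : S.card + 1 = n) (hdom : SDom r S)
    (v0 : V) (hv0 : v0 ∈ S) (hv0e : v0 ∉ Set.range e) :
    (Finset.univ.filter (fun y => y ∉ S ∧ SDom r (insert y S))).card = 2 := by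
  classical
  have hne : S.Nonempty := ⟨v0, hv0⟩
  choose m hmS hm using fun i => Finset.exists_min_image S (r i) hne
  have hsurj : ∀ x ∈ S, ∃ i, m i = x := by
    intro x hx
    obtain ⟨i, hi⟩ := hdom x
    exact ⟨i, hr i (le_antisymm (hm i x hx) (hi _ (hmS i)))⟩
  have himg : Finset.univ.image m = S := by
    ext x
    simp only [Finset.mem_image, Finset.mem_univ, true_and]
    exact ⟨by rintro ⟨i, rfl⟩; exact hmS i, hsurj x⟩
  obtain ⟨a, b, hab, hmab⟩ : ∃ a b, a ≠ b ∧ m a = m b := by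
    by_contra! h
    have : Function.Injective m := fun a b hh => by
      by_contra hne; exact h a b hne hh
    have := Finset.card_image_of_injective Finset.univ this
    rw [himg] at this
    simp at this
    omega
  -- m is injective away from a
  have hinj : ∀ a b, a ≠ b → m a = m b → Set.InjOn m (Finset.univ.erase a : Finset (Fin n)) := by
    intro a b hab hmab
    apply Finset.card_image_iff.mp
    have : (Finset.univ.erase a).image m = S := by
      rw [← himg]
      ext x
      simp only [Finset.mem_image, Finset.mem_erase, Finset.mem_univ, true_and, and_true]
      constructor
      · rintro ⟨i, -, rfl⟩; exact ⟨i, rfl⟩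
      · rintro ⟨i, rfl⟩
        by_cases h : i = a
        · exact ⟨b, hab.symm, by rw [h, hmab]⟩
        · exact ⟨i, h, rfl⟩
    rw [this]
    simp; omega
  have hpair : ∀ i j, i ≠ j → m i = m j → (i = a ∨ i = b) := by
    intro i j hij hmij
    by_contra! h
    have hja : j = a := by
      by_contra hja
      exact hij (hinj a b hab hmab (by simp [h.1]) (by simp [hja]) hmij)
    have hjb : j = b := by
      by_contra hjb
      exact hij (hinj b a hab.symm hmab.symm (by simp [h.2]) (by simp [hjb]) hmij)
    exact hab (hja.symm.trans hjb)
  have key : ∀ a b, a ≠ b → m a = m b → ∃ y, (∀ i, i ≠ a → r i (m i) < r i y) ∧ y ∉ S ∧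
      SDom r (insert y S) ∧
      ∀ z, (∀ i, i ≠ a → r i (m i) < r i z) → SDom r (insert z S) → z = y := by
    intro a b hab hmab
    have hMne : (Finset.univ.filter (fun y => ∀ i, i ≠ a → r i (m i) < r i y)).Nonempty := by
      refine ⟨e a, ?_⟩
      simp only [Finset.mem_filter, Finset.mem_univ, true_and]
      intro i hi
      exact lt_of_le_of_lt (hm i v0 hv0) (hbig i a hi v0 hv0e)
    obtain ⟨y, hy, hymax⟩ := Finset.exists_max_image _ (r a) hMne
    simp only [Finset.mem_filter, Finset.mem_univ, true_and] at hy hymax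
    refine ⟨y, hy, ?_, ?_, ?_⟩
    · intro hyS
      obtain ⟨i, rfl⟩ := hsurj y hyS
      by_cases hi : i = a
      · subst hi
        have := hy b hab.symm
        rw [hmab] at this
        exact lt_irrefl _ this
      · exact lt_irrefl _ (hy i hi)
    · intro z
      by_cases hz : ∀ i, i ≠ a → r i (m i) < r i z
      · refine ⟨a, fun s hs => ?_⟩
        obtain ⟨j, hj⟩ := hdom z
        have hja : j = a := by
          by_contra hja
          exact absurd (hj _ (hmS j)) (not_le.mpr (hz j hja))
        subst hja
        rcases Finset.mem_insert.mp hs with rfl | hs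
        · exact hymax z hz
        · exact hj s hs
      · push Not at hz
        obtain ⟨i, hia, hi⟩ := hz
        refine ⟨i, fun s hs => ?_⟩
        rcases Finset.mem_insert.mp hs with rfl | hs
        · exact hi.trans (hy i hia).le
        · exact hi.trans (hm i s hs)
    · intro z hz hd
      apply hr a
      apply le_antisymm (hymax z hz)
      obtain ⟨i, hi⟩ := hd y
      have hia : i = a := by
        by_contra h
        exact absurd (hi (m i) (by simp [hmS i])) (not_le.mpr (hy i h))
      subst hia
      exact hi z (by simp)
  obtain ⟨ya, hya1, hya2, hya3, hya4⟩ := key a b hab hmab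
  obtain ⟨yb, hyb1, hyb2, hyb3, hyb4⟩ := key b a hab.symm hmab.symm
  rw [Finset.card_eq_two]
  refine ⟨ya, yb, ?_, ?_⟩
  · rintro rfl
    obtain ⟨i, hi⟩ := hdom ya
    refine absurd (hi _ (hmS i)) (not_le.mpr ?_)
    by_cases h : i = a
    · subst h; exact hyb1 i hab
    · exact hya1 i h
  · ext z
    simp only [Finset.mem_filter, Finset.mem_univ, true_and, Finset.mem_insert,
      Finset.mem_singleton]
    constructor
    · rintro ⟨hzS, hd⟩
      -- z is the strict minimum in exactly one coordinate
      obtain ⟨k, hk⟩ := hd z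
      have hzlt : ∀ i s, s ∈ S → r i s ≠ r i z := fun i s hs h => hzS (hr i h ▸ hs)
      have hother : ∀ i, i ≠ k → r i (m i) < r i z := by
        intro i hik
        by_contra! hle
        -- then i,k both have minimum z, the others must cover S
        have hcov : S ⊆ ((Finset.univ.erase k).erase i).image m := by
          intro x hx
          obtain ⟨j, hj⟩ := hd x
          have hxm : m j = x := hr j (le_antisymm (hm j x hx) (hj _ (by simp [hmS j])))
          have hxz := lt_of_le_of_ne (hj z (by simp)) (hzlt j x hx)
          refine Finset.mem_image.mpr ⟨j, ?_, hxm⟩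
          simp only [Finset.mem_erase, Finset.mem_univ, and_true]
          constructor
          · rintro rfl
            rw [hxm] at hle
            omega
          · rintro rfl
            have := hk x (by simp [hx])
            omega
        have h1 := (Finset.card_le_card hcov).trans Finset.card_image_le
        rw [Finset.card_erase_of_mem (by simp [hik]), Finset.card_erase_of_mem (by simp)] at h1
        simp at h1
        have : 0 < S.card := Finset.card_pos.mpr hne
        omega
      have hkab : k = a ∨ k = b := by
        obtain ⟨j, hj⟩ := hd (m k)
        have hjk : j ≠ k := by
          rintro rfl
          have h1 := hj z (by simp)
          have h2 := hk (m j) (by simp [hmS])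
          exact hzlt j _ (hmS j) (le_antisymm h1 h2)
        have : m j = m k := hr j (le_antisymm (hm j _ (hmS k)) (hj _ (by simp [hmS j])))
        exact hpair k j hjk.symm this.symm
      rcases hkab with rfl | rfl
      · exact Or.inl (hya4 z hother hd)
      · exact Or.inr (hyb4 z hother hd)
    · rintro (rfl | rfl)
      · exact ⟨hya2, hya3⟩
      · exact ⟨hyb2, hyb3⟩

theorem scarf {n : ℕ} {V : Type*} [Fintype V] [DecidableEq V] (r : Fin n → V → ℕ)
    (hr : ∀ i, Function.Injective (r i)) (e : Fin n → V)
    (hmin : ∀ i v, r i (e i) ≤ r i v)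
    (hbig : ∀ i j, i ≠ j → ∀ v, v ∉ Set.range e → r i v < r i (e j))
    (c : V → Fin n) (hc : ∀ i, c (e i) = i) (i0 : Fin n) :
    ∃ R : Finset V, R.card = n ∧ SDom r R ∧ R.image c = Finset.univ := by
  classical
  by_contra! hno
  have he : Function.Injective e := fun i j h => by rw [← hc i, ← hc j, h]
  let D : Finset (Finset V) := Finset.univ.filter (fun S => S.card + 1 = n ∧
    S.image c = Finset.univ.erase i0)
  let Rm : Finset (Finset V) := Finset.univ.filter (fun R => R.card = n ∧ SDom r R)
  let rel : Finset V → Finset V → Prop := fun S R => ∃ y, y ∉ S ∧ R = insert y S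
  have hdc := Finset.sum_card_bipartiteAbove_eq_sum_card_bipartiteBelow (s := D) (t := Rm) rel
  -- room side
  have hroom : Even (∑ R ∈ Rm, (Finset.bipartiteBelow rel D R).card) := by
    apply Finset.even_sum
    intro R hR
    have hR' := (Finset.mem_filter.mp hR).2
    have := room_even c i0 R hR'.1 (hno R hR'.1 hR'.2)
    suffices h : (R.filter (fun y => (R.erase y).image c = Finset.univ.erase i0)).card =
        (Finset.bipartiteBelow rel D R).card by rwa [← h]
    apply Finset.card_bij (fun y _ => R.erase y)
    · intro y hy
      have hy' := Finset.mem_filter.mp hy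
      simp only [Finset.bipartiteBelow, Finset.mem_filter, D, Finset.mem_univ, true_and, rel]
      refine ⟨⟨?_, hy'.2⟩, y, by simp, (Finset.insert_erase hy'.1).symm⟩
      rw [Finset.card_erase_add_one hy'.1, hR'.1]
    · intro y hy z hz h
      have hy' := (Finset.mem_filter.mp hy).1
      by_contra hne
      have : y ∈ R.erase z := by simp [hne, hy']
      rw [← h] at this
      simp at this
    · intro S hS
      simp only [Finset.bipartiteBelow, Finset.mem_filter, D, Finset.mem_univ, true_and, rel] at hS
      obtain ⟨⟨h1, h2⟩, y, hy, rfl⟩ := hS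
      refine ⟨y, ?_, by simp [hy]⟩
      simp [hy, h2]
  -- door side
  have hdoor : ∀ S ∈ D, (Finset.bipartiteAbove rel Rm S).card =
      (Finset.univ.filter (fun y => y ∉ S ∧ SDom r (insert y S))).card := by
    intro S hS
    have hS' := (Finset.mem_filter.mp hS).2
    symm
    apply Finset.card_bij (fun y _ => insert y S)
    · intro y hy
      have hy' := (Finset.mem_filter.mp hy).2
      simp only [Finset.bipartiteAbove, Finset.mem_filter, Rm, Finset.mem_univ, true_and, rel]
      refine ⟨⟨?_, hy'.2⟩, y, hy'.1, rfl⟩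
      rw [Finset.card_insert_of_notMem hy'.1, hS'.1]
    · intro y hy z hz h
      have hy' := (Finset.mem_filter.mp hy).2.1
      have : y ∈ insert z S := by rw [← h]; simp
      simpa [hy'] using this
    · intro R hR
      simp only [Finset.bipartiteAbove, Finset.mem_filter, Rm, Finset.mem_univ, true_and, rel] at hR
      obtain ⟨⟨h1, h2⟩, y, hy, rfl⟩ := hR
      exact ⟨y, by simp [hy, h2], rfl⟩
  let S0 := (Finset.univ.erase i0).image e
  have hS0 : S0 ∈ D := by
    simp only [D, S0, Finset.mem_filter, Finset.mem_univ, true_and]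
    constructor
    · rw [Finset.card_image_of_injective _ he, Finset.card_erase_add_one (by simp)]; simp
    · rw [Finset.image_image]
      have : c ∘ e = id := funext hc
      rw [this, Finset.image_id]
  have hodd : ¬ Even (∑ S ∈ D, (Finset.bipartiteAbove rel Rm S).card) := by
    rw [← Finset.add_sum_erase _ _ hS0, hdoor _ hS0, outer_one r hr e he hmin hbig i0]
    have : Even (∑ S ∈ D.erase S0, (Finset.bipartiteAbove rel Rm S).card) := by
      apply Finset.even_sum
      intro S hS
      obtain ⟨hne, hSD⟩ := Finset.mem_erase.mp hS
      rw [hdoor S hSD]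
      have hS' := (Finset.mem_filter.mp hSD).2
      by_cases hd : SDom r S
      · obtain ⟨v0, hv0, hv0e⟩ : ∃ v0 ∈ S, v0 ∉ Set.range e := by
          by_contra! h
          apply hne
          ext v
          simp only [S0, Finset.mem_image, Finset.mem_erase, Finset.mem_univ, and_true]
          constructor
          · intro hv
            obtain ⟨j, rfl⟩ := h v hv
            have : c (e j) ∈ S.image c := Finset.mem_image_of_mem _ hv
            rw [hS'.2, hc] at this
            exact ⟨j, (Finset.mem_erase.mp this).1, rfl⟩
          · rintro ⟨j, hj, rfl⟩
            have : j ∈ S.image c := by rw [hS'.2]; simp [hj]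
            obtain ⟨v, hv, rfl⟩ := Finset.mem_image.mp this
            obtain ⟨j, rfl⟩ := h v hv
            rwa [hc]
        rw [inner_two r hr e hbig S hS'.1 hd v0 hv0 hv0e]
        exact even_two
      · rw [Finset.filter_eq_empty_iff.mpr]
        · simp
        · rintro y - ⟨-, h⟩
          exact hd (h.mono (Finset.subset_insert _ _))
    intro h
    rw [Nat.even_add] at h
    simp [this] at h
  rw [hdc] at hodd
  exact hodd hroom

theorem grid_lemma {n : ℕ} (hn : 0 < n) (m : ℕ) (cc : (Fin n → ℕ) → Fin n) :
    ∃ x : Fin n → ℕ, ∑ i, x i = m ∧ ∀ i, x i ≤ n ∨ ∃ z : Fin n → ℕ, ∑ i, z i = m ∧ cc z = i ∧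
      ∀ j, x j ≤ z j + n ∧ z j ≤ x j + n := by
  classical
  let T := {x : Fin n → ℕ // x ∈ Finset.piAntidiag (Finset.univ : Finset (Fin n)) m}
  have hT : ∀ x : T, ∑ i, x.1 i = m := fun x => by
    have := x.2
    rw [Finset.mem_piAntidiag] at this
    exact this.1
  have hmk : ∀ x : Fin n → ℕ, ∑ i, x i = m →
      x ∈ Finset.piAntidiag (Finset.univ : Finset (Fin n)) m := fun x hx => by
    rw [Finset.mem_piAntidiag]; exact ⟨hx, by simp⟩
  have hTle : ∀ (x : T) i, x.1 i ≤ m := fun x i => by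
    exact (Finset.single_le_sum (f := x.1) (fun _ _ => Nat.zero_le _)
      (Finset.mem_univ i)).trans (hT x).le
  let K := Fintype.card T
  let eT : T ≃ Fin K := Fintype.equivFin T
  let r : Fin n → T ⊕ Fin n → ℕ := fun i v => match v with
    | .inl x => 1 + x.1 i * K + eT x
    | .inr j => if j = i then 0 else 1 + (m + 1) * K + j
  have hrl : ∀ i x, r i (.inl x) = 1 + x.1 i * K + eT x := fun _ _ => rfl
  have hrr : ∀ i j, r i (.inr j) = if j = i then 0 else 1 + (m + 1) * K + j := fun _ _ => rfl
  have hlt : ∀ i x, r i (.inl x) < 1 + (m + 1) * K := by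
    intro i x
    rw [hrl]
    have h1 := (eT x).2
    have h2 := Nat.mul_le_mul_right K (hTle x i)
    rw [add_mul, one_mul]
    omega
  have hord : ∀ i x y, r i (.inl x) ≤ r i (.inl y) → x.1 i ≤ y.1 i := by
    intro i x y h
    rw [hrl, hrl] at h
    by_contra! hc
    have h1 := (eT y).2
    have h2 := Nat.mul_le_mul_right K (Nat.succ_le_of_lt hc)
    rw [Nat.succ_mul] at h2
    omega
  have hinj : ∀ i, Function.Injective (r i) := by
    rintro i (x | j) (y | l) h
    · have h1 := hord i x y h.le
      have h2 := hord i y x h.ge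
      rw [hrl, hrl, le_antisymm h1 h2] at h
      have : eT x = eT y := Fin.ext (by omega)
      rw [eT.injective this]
    · have h1 := hlt i x
      rw [h, hrr] at h1
      rw [hrr, hrl] at h
      split_ifs at h h1 <;> omega
    · have h1 := hlt i y
      rw [← h, hrr] at h1
      rw [hrr, hrl] at h
      split_ifs at h h1 <;> omega
    · rw [hrr, hrr] at h
      split_ifs at h with h1 h2 h2
      · rw [h1, h2]
      · omega
      · omega
      · congr 1; exact Fin.ext (by omega)
  let c : T ⊕ Fin n → Fin n := fun v => match v with
    | .inl x => cc x.1
    | .inr j => j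
  obtain ⟨R, hRc, hRd, hRr⟩ := scarf r hinj (fun i => Sum.inr i)
    (fun i v => by rw [hrr]; simp)
    (by
      rintro i j hij (x | l) hv
      · have := hlt i x
        have h2 : r i (.inr j) = 1 + (m + 1) * K + j := by rw [hrr]; simp [hij.symm]
        omega
      · exact absurd ⟨l, rfl⟩ hv) c (fun i => rfl) ⟨0, hn⟩
  let C : Finset (Fin n) := Finset.univ.filter (fun i => Sum.inr i ∉ R)
  let σ : Finset T := Finset.univ.filter (fun x => Sum.inl x ∈ R)
  have hcol : ∀ i ∈ C, ∃ z ∈ σ, cc z.1 = i := by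
    intro i hi
    have hi' : Sum.inr i ∉ R := (Finset.mem_filter.mp hi).2
    have : i ∈ R.image c := by rw [hRr]; simp
    obtain ⟨v, hv, hvi⟩ := Finset.mem_image.mp this
    rcases v with x | j
    · exact ⟨x, by simp [σ, hv], hvi⟩
    · have : j = i := hvi
      exact absurd (this ▸ hv) hi'
  have hdom : ∀ y : T, ∃ i ∈ C, ∀ x ∈ σ, y.1 i ≤ x.1 i := by
    intro y
    obtain ⟨i, hi⟩ := hRd (.inl y)
    refine ⟨i, ?_, fun x hx => hord i y x (hi _ (Finset.mem_filter.mp hx).2)⟩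
    simp only [C, Finset.mem_filter, Finset.mem_univ, true_and]
    intro hmem
    have := hi _ hmem
    rw [hrl, hrr] at this
    simp at this
  have y0 : T := ⟨fun i => if i = ⟨0, hn⟩ then m else 0, hmk _ (by simp)⟩
  obtain ⟨i1, hi1, -⟩ := hdom y0
  obtain ⟨x0, hx0, -⟩ := hcol i1 hi1
  choose b hbσ hb using fun i : Fin n => Finset.exists_min_image σ (fun x => x.1 i) ⟨x0, hx0⟩
  have hbig : m < ∑ i ∈ C, ((b i).1 i + 1) := by
    by_contra! hle
    let y : Fin n → ℕ := fun i => (if i ∈ C then (b i).1 i + 1 else 0) +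
      (if i = i1 then m - ∑ i ∈ C, ((b i).1 i + 1) else 0)
    have hy : ∑ i, y i = m := by
      simp only [y, Finset.sum_add_distrib, Finset.sum_ite_mem, Finset.univ_inter]
      simp only [Finset.sum_add_distrib] at hle
      simp
      simp at hle
      omega
    obtain ⟨i, hi, h⟩ := hdom ⟨y, hmk y hy⟩
    have := h _ (hbσ i)
    simp only [y, hi, if_true] at this
    omega
  have hbig2 : m < ∑ i ∈ C, (b i).1 i + n := by
    rw [Finset.sum_add_distrib] at hbig
    have : C.card ≤ n := by simpa using Finset.card_le_univ C
    simp at hbig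
    omega
  have hin : ∀ x ∈ σ, ∀ i ∈ C, (b i).1 i ≤ x.1 i ∧ x.1 i ≤ (b i).1 i + n := by
    intro x hx i hi
    refine ⟨hb i x hx, ?_⟩
    have h1 : ∑ j ∈ C, x.1 j ≤ m := by
      exact (Finset.sum_le_sum_of_subset (Finset.subset_univ _)).trans (hT x).le
    have h2 : ∑ j ∈ C.erase i, (b j).1 j ≤ ∑ j ∈ C.erase i, x.1 j :=
      Finset.sum_le_sum fun j _ => hb j x hx
    rw [← Finset.add_sum_erase _ _ hi] at h1 hbig2
    omega
  have hout : ∀ x ∈ σ, ∀ i ∉ C, x.1 i ≤ n := by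
    intro x hx i hi
    have h1 : ∑ j ∈ insert i C, x.1 j ≤ m := by
      exact (Finset.sum_le_sum_of_subset (Finset.subset_univ _)).trans (hT x).le
    have h2 : ∑ j ∈ C, (b j).1 j ≤ ∑ j ∈ C, x.1 j :=
      Finset.sum_le_sum fun j _ => hb j x hx
    rw [Finset.sum_insert hi] at h1
    omega
  refine ⟨x0.1, hT x0, fun i => ?_⟩
  by_cases hi : i ∈ C
  · right
    obtain ⟨z, hz, hzc⟩ := hcol i hi
    refine ⟨z.1, hT z, hzc, fun j => ?_⟩
    by_cases hj : j ∈ C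
    · have h1 := hin x0 hx0 j hj
      have h2 := hin z hz j hj
      omega
    · have h1 := hout x0 hx0 j hj
      have h2 := hout z hz j hj
      omega
  · exact Or.inl (hout x0 hx0 i hi)

theorem brouwer_simplex {n : ℕ} (hn : 0 < n) (f : (Fin n → ℝ) → Fin n → ℝ)
    (hf : ContinuousOn f (stdSimplex ℝ (Fin n)))
    (hmap : ∀ x ∈ stdSimplex ℝ (Fin n), f x ∈ stdSimplex ℝ (Fin n)) :
    ∃ x ∈ stdSimplex ℝ (Fin n), ∀ i, x i ≤ f x i := by
  classical
  have : Nonempty (Fin n) := ⟨⟨0, hn⟩⟩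
  let h : (Fin n → ℝ) → Fin n → ℝ := fun x => x - f x
  have hh : ContinuousOn h (stdSimplex ℝ (Fin n)) := continuousOn_id.sub hf
  have hcpt : IsCompact (stdSimplex ℝ (Fin n)) := isCompact_stdSimplex ℝ (Fin n)
  have hu := hcpt.uniformContinuousOn_of_continuous hh
  rw [Metric.uniformContinuousOn_iff] at hu
  have happrox : ∀ ε > 0, ∃ x ∈ stdSimplex ℝ (Fin n), ∀ i, h x i ≤ ε := by
    intro ε hε
    obtain ⟨δ, hδ, hu⟩ := hu ε hε
    obtain ⟨m, hm⟩ := exists_nat_gt (n / min δ ε)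
    have hmin : 0 < min δ ε := lt_min hδ hε
    have hmpos : (0 : ℝ) < m := lt_of_le_of_lt (by positivity) hm
    have hnm : (n : ℝ) / m < min δ ε := by
      rw [div_lt_iff₀ hmin] at hm
      rw [div_lt_iff₀ hmpos]; linarith
    let p : (Fin n → ℕ) → Fin n → ℝ := fun x i => x i / m
    have hp : ∀ x : Fin n → ℕ, ∑ i, x i = m → p x ∈ stdSimplex ℝ (Fin n) := by
      intro x hx
      refine ⟨fun i => by positivity, ?_⟩
      simp only [p]
      rw [← Finset.sum_div, ← Nat.cast_sum, hx, div_self hmpos.ne']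
    have hcc : ∀ x : Fin n → ℕ, ∃ i, ∑ i, x i = m → h (p x) i ≤ 0 := by
      intro x
      by_cases hx : ∑ i, x i = m
      · by_contra! hcon
        have h1 : ∑ i, f (p x) i < ∑ i, p x i :=
          Finset.sum_lt_sum_of_nonempty Finset.univ_nonempty fun i _ => by
            have := (hcon i).2
            simp only [h, Pi.sub_apply] at this
            linarith
        rw [(hp x hx).2, (hmap _ (hp x hx)).2] at h1
        exact lt_irrefl _ h1
      · exact ⟨Classical.arbitrary _, fun h => absurd h hx⟩
    choose cc hcc using hcc
    obtain ⟨x, hx, hxi⟩ := grid_lemma hn m cc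
    refine ⟨p x, hp x hx, fun i => ?_⟩
    rcases hxi i with hi | ⟨z, hz, hzi, hzx⟩
    · have h1 : p x i ≤ n / m := by
        simp only [p]
        gcongr
      have h2 := (hmap _ (hp x hx)).1 i
      have h3 := min_le_right δ ε
      simp only [h, Pi.sub_apply]
      linarith
    · have hd : dist (p x) (p z) < δ := by
        rw [dist_pi_lt_iff hδ]
        intro j
        refine lt_of_le_of_lt ?_ (hnm.trans_le (min_le_left _ _))
        rw [Real.dist_eq]
        simp only [p]
        rw [← sub_div, abs_div, abs_of_pos hmpos]
        gcongr
        obtain ⟨h1, h2⟩ := hzx j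
        have h1' : (x j : ℝ) ≤ z j + n := by exact_mod_cast h1
        have h2' : (z j : ℝ) ≤ x j + n := by exact_mod_cast h2
        rw [abs_le]; constructor <;> linarith
      have h1 := hu _ (hp x hx) _ (hp z hz) hd
      rw [dist_pi_lt_iff hε] at h1
      have h2 := h1 i
      rw [Real.dist_eq] at h2
      have h3 := (abs_lt.mp h2).2
      have h4 := hcc z hz
      rw [hzi] at h4
      linarith
  let H : (Fin n → ℝ) → ℝ := fun x => Finset.univ.sup' Finset.univ_nonempty (fun i => h x i)
  have hH : ContinuousOn H (stdSimplex ℝ (Fin n)) := by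
    apply ContinuousOn.finset_sup'_apply
    intro i _
    exact (continuous_apply i).comp_continuousOn hh
  obtain ⟨x1, hx1, -⟩ := happrox 1 one_pos
  obtain ⟨x, hx, hmin⟩ := hcpt.exists_isMinOn ⟨x1, hx1⟩ hH
  refine ⟨x, hx, fun i => ?_⟩
  have : H x ≤ 0 := by
    apply le_of_forall_pos_le_add
    intro ε hε
    obtain ⟨y, hy, hyi⟩ := happrox ε hε
    rw [zero_add]
    exact (hmin hy).trans (Finset.sup'_le _ _ fun i _ => hyi i)
  have h2 : h x i ≤ H x := Finset.le_sup' (fun i => h x i) (Finset.mem_univ i)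
  have h3 : h x i = x i - f x i := rfl
  linarith

theorem simplex_vi {n : ℕ} (hn : 0 < n) (g : (Fin n → ℝ) → Fin n → ℝ)
    (hg : ContinuousOn g (stdSimplex ℝ (Fin n)))
    (h0 : ∀ x ∈ stdSimplex ℝ (Fin n), ∑ j, x j * g x j = 0) :
    ∃ x ∈ stdSimplex ℝ (Fin n), ∀ j, g x j ≤ 0 := by
  let S : (Fin n → ℝ) → ℝ := fun x => ∑ j, max (g x j) 0
  have hS0 : ∀ x, 0 ≤ S x := fun x => Finset.sum_nonneg fun j _ => le_max_right _ _
  have hgj : ∀ j, ContinuousOn (fun x => max (g x j) 0) (stdSimplex ℝ (Fin n)) := fun j =>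
    ((continuous_apply j).comp_continuousOn hg).sup continuousOn_const
  have hSc : ContinuousOn S (stdSimplex ℝ (Fin n)) := continuousOn_finsetSum _ fun j _ => hgj j
  obtain ⟨x, hx, hfix⟩ := brouwer_simplex hn (fun x j => (x j + max (g x j) 0) / (1 + S x))
    (by
      apply continuousOn_pi.mpr
      intro j
      refine ContinuousOn.div (((continuous_apply j).continuousOn).add (hgj j))
        (continuousOn_const.add hSc) ?_
      intro x _
      have := hS0 x
      positivity)
    (by
      intro x hx
      have := hS0 x
      refine ⟨fun j => div_nonneg (add_nonneg (hx.1 j) (le_max_right _ _)) (by positivity), ?_⟩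
      rw [← Finset.sum_div, Finset.sum_add_distrib, hx.2]
      exact div_self (by positivity))
  refine ⟨x, hx, ?_⟩
  have hS := hS0 x
  have h1 : ∀ j, x j * S x ≤ max (g x j) 0 := by
    intro j
    have := hfix j
    rw [le_div_iff₀ (by positivity)] at this
    linarith
  have h2 : ∀ j ∈ Finset.univ, x j * S x = max (g x j) 0 := by
    apply (Finset.sum_eq_sum_iff_of_le fun j _ => h1 j).mp
    rw [← Finset.sum_mul, hx.2, one_mul]
  have h3 : ∑ j, max (g x j) 0 * max (g x j) 0 = 0 := by
    have : ∑ j, max (g x j) 0 * max (g x j) 0 = (∑ j, x j * g x j) * S x := by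
      rw [Finset.sum_mul]
      refine Finset.sum_congr rfl fun j hj => ?_
      have e1 : max (g x j) 0 * max (g x j) 0 = max (g x j) 0 * g x j := by
        rcases le_total (g x j) 0 with h | h
        · rw [max_eq_right h]; simp
        · rw [max_eq_left h]
      rw [e1, ← h2 j hj]; ring
    rw [this, h0 x hx, zero_mul]
  intro j
  have := (Finset.sum_eq_zero_iff_of_nonneg fun j _ => mul_self_nonneg _).mp h3 j (Finset.mem_univ _)
  have h4 := mul_self_eq_zero.mp this
  have := le_max_left (g x j) 0
  linarith

open MeasureTheory ProbabilityTheory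

theorem simplex_vi' {n : ℕ} (hn : 0 < n) (g : stdSimplex ℝ (Fin n) → Fin n → ℝ)
    (hg : Continuous g)
    (h0 : ∀ x : stdSimplex ℝ (Fin n), ∑ j, x.1 j * g x j = 0) :
    ∃ x : stdSimplex ℝ (Fin n), ∀ j, g x j ≤ 0 := by
  classical
  obtain ⟨x, hx, h⟩ := simplex_vi hn (fun x => if h : x ∈ stdSimplex ℝ (Fin n) then g ⟨x, h⟩ else 0)
    (by
      rw [continuousOn_iff_continuous_restrict]
      convert hg using 1
      ext x
      have := x.2
      simp)
    (by
      intro x hx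
      simp only [hx, dif_pos]
      exact h0 ⟨x, hx⟩)
  refine ⟨⟨x, hx⟩, ?_⟩
  simpa only [hx, dif_pos] using h

theorem integral_pi_update {N : ℕ} {X : Fin N → Type*}
    [∀ i, MetricSpace (X i)] [∀ i, CompactSpace (X i)]
    [∀ i, MeasurableSpace (X i)] [∀ i, BorelSpace (X i)]
    (F : (Π j, X j) → ℝ) (hF : Continuous F)
    (ν : Π j, Measure (X j)) [∀ j, IsProbabilityMeasure (ν j)] (i : Fin N)
    (τ : Measure (X i)) [IsProbabilityMeasure τ] :
    ∫ x, F x ∂(Measure.pi (Function.update ν i τ)) =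
      ∫ t, (∫ x, F (Function.update x i t) ∂(Measure.pi ν)) ∂τ := by
  have hinst : ∀ j, IsProbabilityMeasure (Function.update ν i τ j) := by
    intro j
    by_cases h : j = i
    · subst h; simpa
    · simp only [Function.update_of_ne h]; infer_instance
  have hcont : Continuous (fun p : X i × (Π j, X j) => Function.update p.2 i p.1) :=
    continuous_snd.update i continuous_fst
  have hpi : Measure.pi (Function.update ν i τ) =
      (τ.prod (Measure.pi ν)).map (fun p => Function.update p.2 i p.1) := by
    apply Measure.pi_eq
    intro s hs
    rw [Measure.map_apply hcont.measurable (MeasurableSet.univ_pi hs)]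
    have : (fun p : X i × (Π j, X j) => Function.update p.2 i p.1) ⁻¹' (Set.univ.pi s) =
        s i ×ˢ Set.univ.pi (Function.update s i Set.univ) := by
      ext ⟨t, x⟩
      simp only [Set.mem_preimage, Set.mem_pi, Set.mem_univ, true_imp_iff, Set.mem_prod]
      constructor
      · intro h
        refine ⟨by simpa using h i, fun j => ?_⟩
        by_cases hj : j = i
        · subst hj; simp
        · simpa [Function.update_of_ne hj] using h j
      · rintro ⟨h1, h2⟩ j
        by_cases hj : j = i
        · subst hj; simpa using h1
        · simpa [Function.update_of_ne hj] using h2 j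
    rw [this, Measure.prod_prod, Measure.pi_pi, ← Finset.mul_prod_erase _ _ (Finset.mem_univ i),
      ← Finset.mul_prod_erase (Finset.univ) (fun j => Function.update ν i τ j (s j))
        (Finset.mem_univ i)]
    simp only [Function.update_self, measure_univ, one_mul]
    congr 1
    refine Finset.prod_congr rfl fun j hj => ?_
    have hj := (Finset.mem_erase.mp hj).1
    simp [Function.update_of_ne hj]
  rw [hpi, integral_map hcont.measurable.aemeasurable hF.aestronglyMeasurable]
  have hFc : Continuous (fun p : X i × (Π j, X j) => F (Function.update p.2 i p.1)) :=
    hF.comp hcont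
  rw [integral_prod]
  exact hFc.integrable_of_hasCompactSupport (HasCompactSupport.of_compactSpace _)

/-- Mixture of finitely many pure profiles -/
noncomputable def mixP {n : ℕ} {Y : Type*} [MeasurableSpace Y] (q : Fin n → Y)
    (x : stdSimplex ℝ (Fin n)) : ProbabilityMeasure Y :=
  ⟨∑ l, ENNReal.ofReal (x.1 l) • Measure.dirac (q l), ⟨by
    simp only [Measure.coe_finset_sum, Finset.sum_apply, Measure.smul_apply, measure_univ,
      smul_eq_mul, mul_one]
    rw [← ENNReal.ofReal_sum_of_nonneg fun i _ => x.2.1 i, x.2.2, ENNReal.ofReal_one]⟩⟩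

theorem integral_mixP {n : ℕ} {Y : Type*} [MetricSpace Y] [CompactSpace Y] [MeasurableSpace Y]
    [BorelSpace Y] (q : Fin n → Y) (x : stdSimplex ℝ (Fin n)) (f : Y → ℝ) (hf : Continuous f) :
    ∫ y, f y ∂(mixP q x : Measure Y) = ∑ l, x.1 l * f (q l) := by
  have : (mixP q x : Measure Y) = ∑ l, ENNReal.ofReal (x.1 l) • Measure.dirac (q l) := rfl
  rw [this, integral_finset_sum_measure]
  · refine Finset.sum_congr rfl fun l _ => ?_
    rw [integral_smul_measure, integral_dirac, ENNReal.toReal_ofReal (x.2.1 l), smul_eq_mul]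
  · intro l _
    exact (hf.integrable_of_hasCompactSupport
      (HasCompactSupport.of_compactSpace _)).smul_measure ENNReal.ofReal_ne_top

theorem continuous_mixP {n : ℕ} {Y : Type*} [MetricSpace Y] [CompactSpace Y] [MeasurableSpace Y]
    [BorelSpace Y] (q : Fin n → Y) : Continuous (mixP q) := by
  rw [ProbabilityMeasure.continuous_iff_forall_continuous_integral]
  intro f
  simp_rw [integral_mixP q _ f f.continuous]
  refine continuous_finsetSum _ fun l _ => ?_
  exact ((continuous_apply l).comp continuous_subtype_val).mul continuous_const

theorem continuous_pi_integral {N : ℕ} {X : Fin N → Type*}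
    [∀ i, MetricSpace (X i)] [∀ i, CompactSpace (X i)]
    [∀ i, MeasurableSpace (X i)] [∀ i, BorelSpace (X i)]
    (F : (Π j, X j) → ℝ) (hF : Continuous F) :
    Continuous (fun ν : Π j, ProbabilityMeasure (X j) =>
      ∫ x, F x ∂(Measure.pi (fun j => (ν j : Measure (X j))))) := by
  have h1 := ProbabilityMeasure.continuous_integral_boundedContinuousFunction
    (BoundedContinuousFunction.mkOfCompact ⟨F, hF⟩)
  exact h1.comp (ProbabilityMeasure.continuous_pi (α := X))

theorem glicksberg {N : ℕ} {X : Fin N → Type*}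
    [∀ i, MetricSpace (X i)] [∀ i, CompactSpace (X i)] [∀ i, Nonempty (X i)]
    [∀ i, MeasurableSpace (X i)] [∀ i, BorelSpace (X i)]
    (F : Fin N → (Π j, X j) → ℝ) (hF : ∀ i, Continuous (F i)) :
    ∃ ν : Π j, ProbabilityMeasure (X j), ∀ i t,
      ∫ x, F i (Function.update x i t) ∂(Measure.pi (fun j => (ν j : Measure (X j)))) ≤
      ∫ x, F i x ∂(Measure.pi (fun j => (ν j : Measure (X j)))) := by
  classical
  let u : Fin N → (Π j, ProbabilityMeasure (X j)) → ℝ := fun i ν =>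
    ∫ x, F i x ∂(Measure.pi (fun j => (ν j : Measure (X j))))
  let G : ∀ i, (Π j, ProbabilityMeasure (X j)) → X i → ℝ := fun i ν t =>
    ∫ x, F i (Function.update x i t) ∂(Measure.pi (fun j => (ν j : Measure (X j))))
  have hu : ∀ i, Continuous (u i) := fun i => continuous_pi_integral _ (hF i)
  have hGν : ∀ i t, Continuous (fun ν => G i ν t) := fun i t =>
    continuous_pi_integral _ ((hF i).comp (continuous_id.update i continuous_const))
  have hGt : ∀ i ν, Continuous (G i ν) := by
    intro i ν
    have := continuous_parametric_integral_of_continuous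
      (μ := Measure.pi (fun j => (ν j : Measure (X j))))
      (f := fun (t : X i) (x : Π j, X j) => F i (Function.update x i t))
      (by exact (hF i).comp (continuous_snd.update i continuous_fst)) isCompact_univ
    simpa using this
  have hGu : ∀ i ν, ∫ t, G i ν t ∂(ν i : Measure (X i)) = u i ν := by
    intro i ν
    have := integral_pi_update (F i) (hF i) (fun j => (ν j : Measure (X j))) i (ν i)
    rw [Function.update_eq_self] at this
    exact this.symm
  let φ : (Π j, ProbabilityMeasure (X j)) → (Π j, X j) → ℝ := fun ν q =>
    ∑ i, (G i ν (q i) - u i ν)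
  have hφ : ∀ q, Continuous (fun ν => φ ν q) := fun q =>
    continuous_finsetSum _ fun i _ => (hGν i (q i)).sub (hu i)
  have hfin : ∀ s : Finset (Π j, X j), ∃ ν, ∀ q ∈ s, φ ν q ≤ 0 := by
    intro s
    rcases s.eq_empty_or_nonempty with rfl | hs
    · exact ⟨fun j => ⟨Measure.dirac (Classical.arbitrary _), inferInstance⟩, by simp⟩
    let q : Fin s.card → (Π j, X j) := fun l => (s.equivFin.symm l).1
    let p : stdSimplex ℝ (Fin s.card) → Π j, ProbabilityMeasure (X j) := fun x j =>
      mixP (fun l => q l j) x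
    have hp : Continuous p := continuous_pi fun j => continuous_mixP _
    obtain ⟨x, hx⟩ := simplex_vi' (Finset.card_pos.mpr hs) (fun x l => φ (p x) (q l))
      (continuous_pi fun l => (hφ (q l)).comp hp)
      (by
        intro x
        simp only [φ, Finset.mul_sum]
        rw [Finset.sum_comm]
        refine Finset.sum_eq_zero fun i _ => ?_
        have h1 := integral_mixP (fun l => q l i) x (G i (p x)) (hGt i (p x))
        have h2 := hGu i (p x)
        have h3 : ∑ l, x.1 l * u i (p x) = u i (p x) := by
          rw [← Finset.sum_mul, x.2.2, one_mul]
        simp only [mul_sub, Finset.sum_sub_distrib]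
        rw [h3, ← h1, sub_eq_zero]
        exact h2)
    refine ⟨p x, fun r hr => ?_⟩
    have := hx (s.equivFin ⟨r, hr⟩)
    simpa [q] using this
  obtain ⟨ν, hν⟩ : ∃ ν, ∀ q, φ ν q ≤ 0 := by
    have := isCompact_univ.inter_iInter_nonempty (X := Π j, ProbabilityMeasure (X j))
      (fun q : (Π j, X j) => {ν | φ ν q ≤ 0})
      (fun q => isClosed_le (hφ q) continuous_const)
      (by
        intro s
        obtain ⟨ν, h⟩ := hfin s
        exact ⟨ν, trivial, by simpa using h⟩)
    obtain ⟨ν, -, h⟩ := this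
    exact ⟨ν, fun q => by simpa using Set.mem_iInter.mp h q⟩
  refine ⟨ν, fun i t => ?_⟩
  have hbest : ∀ j, ∃ y, u j ν ≤ G j ν y := by
    intro j
    rw [← hGu]
    exact exists_integral_le ((hGt j ν).integrable_of_hasCompactSupport
      (HasCompactSupport.of_compactSpace _))
  choose y hy using hbest
  have h1 := hν (Function.update y i t)
  simp only [φ] at h1
  rw [← Finset.add_sum_erase _ _ (Finset.mem_univ i)] at h1
  have h2 : 0 ≤ ∑ j ∈ Finset.univ.erase i, (G j ν (Function.update y i t j) - u j ν) := by
    refine Finset.sum_nonneg fun j hj => ?_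
    rw [Function.update_of_ne (Finset.mem_erase.mp hj).1]
    exact sub_nonneg.mpr (hy j)
  rw [Function.update_self] at h1
  change G i ν t ≤ u i ν
  linarith


/-- **Theorem 2 (BNE attainability with observable uniform preferences), ex-ante form.**
With commonly observed fixed preference vectors `w i`, continuous vectorised rewards `f i`,
and a common prior `μ` over observation profiles, there exists a profile of behavioral
strategies (Markov kernels) `κ*` such that no agent can improve its ex-ante payoff by
unilaterally deviating to any other Markov kernel. -/
theorem bne_exists_observable_preferences
    (N k : ℕ) (hN : 1 ≤ N) (hk : 1 ≤ k)
    (O : Fin N → Type*) (X : Fin N → Type*)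
    [∀ i, MetricSpace (O i)] [∀ i, CompactSpace (O i)] [∀ i, Nonempty (O i)]
    [∀ i, MeasurableSpace (O i)] [∀ i, BorelSpace (O i)]
    [∀ i, MetricSpace (X i)] [∀ i, CompactSpace (X i)] [∀ i, Nonempty (X i)]
    [∀ i, MeasurableSpace (X i)] [∀ i, BorelSpace (X i)]
    (μ : Measure (Π i, O i)) [IsProbabilityMeasure μ]
    (w : Π _ : Fin N, stdSimplex ℝ (Fin k))
    (f : Π _ : Fin N, (Π j, X j) → (Fin k → ℝ))
    (hf : ∀ i, Continuous (f i))
    (J : Fin N → (Π j, Kernel (O j) (X j)) → ℝ)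
    (hJ : ∀ i κ, J i κ =
      ∫ o, (∫ x, (∑ m, (w i : Fin k → ℝ) m * f i x m)
        ∂(Measure.pi (fun j => κ j (o j)))) ∂μ) :
    ∃ κstar : Π j, Kernel (O j) (X j),
      (∀ j, IsMarkovKernel (κstar j)) ∧
      ∀ i (τ : Kernel (O i) (X i)), IsMarkovKernel τ →
        J i (Function.update κstar i τ) ≤ J i κstar := by
  classical
  let F : Fin N → (Π j, X j) → ℝ := fun i x => ∑ m, (w i : Fin k → ℝ) m * f i x m
  have hF : ∀ i, Continuous (F i) := fun i =>
    continuous_finsetSum _ fun m _ => continuous_const.mul ((continuous_apply m).comp (hf i))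
  obtain ⟨ν, hν⟩ := glicksberg F hF
  refine ⟨fun j => Kernel.const (O j) (ν j : Measure (X j)), fun j => inferInstance, ?_⟩
  intro i τ hτ
  rw [hJ, hJ]
  simp only [Kernel.const_apply, integral_const, probReal_univ, one_smul]
  let G : X i → ℝ := fun t =>
    ∫ x, F i (Function.update x i t) ∂(Measure.pi (fun j => (ν j : Measure (X j))))
  have hG : Continuous G := by
    have := continuous_parametric_integral_of_continuous
      (μ := Measure.pi (fun j => (ν j : Measure (X j))))
      (f := fun (t : X i) (x : Π j, X j) => F i (Function.update x i t))
      (by exact (hF i).comp (continuous_snd.update i continuous_fst)) isCompact_univ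
    simpa [G] using this
  have hkey : ∀ o : Π j, O j, ∫ x, F i x ∂(Measure.pi (fun j =>
      (Function.update (fun j => Kernel.const (O j) (ν j : Measure (X j))) i τ) j (o j))) =
      ∫ t, G t ∂(τ (o i)) := by
    intro o
    rw [← integral_pi_update (F i) (hF i) (fun j => (ν j : Measure (X j))) i (τ (o i))]
    congr 2
    funext j
    by_cases hj : j = i
    · subst hj; simp
    · simp [Function.update_of_ne hj]
  change ∫ o, (∫ x, F i x ∂(Measure.pi (fun j =>
      (Function.update (fun j => Kernel.const (O j) (ν j : Measure (X j))) i τ) j (o j)))) ∂μ ≤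
    ∫ x, F i x ∂(Measure.pi (fun j => (ν j : Measure (X j))))
  simp_rw [hkey]
  set U := ∫ x, F i x ∂(Measure.pi (fun j => (ν j : Measure (X j)))) with hU
  have hGi : ∀ ρ : Measure (X i), IsProbabilityMeasure ρ → Integrable G ρ := fun ρ _ =>
    hG.integrable_of_hasCompactSupport (HasCompactSupport.of_compactSpace _)
  have hle : ∀ o : Π j, O j, ∫ t, G t ∂(τ (o i)) ≤ U := by
    intro o
    calc ∫ t, G t ∂(τ (o i)) ≤ ∫ _, U ∂(τ (o i)) :=
          integral_mono (hGi _ inferInstance) (integrable_const _) (fun t => hν i t)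
      _ = U := by simp
  obtain ⟨B, hB⟩ := isCompact_univ.exists_bound_of_continuousOn hG.continuousOn
  have hint : Integrable (fun o : Π j, O j => ∫ t, G t ∂(τ (o i))) μ := by
    refine Integrable.of_bound (C := B) ?_ ?_
    · have h1 : StronglyMeasurable (fun a => ∫ t, G t ∂(τ a)) :=
        hG.stronglyMeasurable.integral_kernel
      exact (h1.comp_measurable (measurable_pi_apply i)).aestronglyMeasurable
    · refine Filter.Eventually.of_forall fun o => ?_
      have := norm_integral_le_of_norm_le_const (μ := τ (o i)) (f := G) (C := B)
        (Filter.Eventually.of_forall fun t => hB t trivial)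
      simpa using this
  calc ∫ o, (∫ t, G t ∂(τ (o i))) ∂μ ≤ ∫ _, U ∂μ :=
        integral_mono hint (integrable_const _) hle
    _ = U := by simp
end

section
/- Let ι be a finite type and for each i ∈ ι let X i be a nonempty compact metric space with its Borel σ-algebra, and let f : (Π i, X i) → ℝ be continuous. Then the map from Π i, ProbabilityMeasure (X i) (with the product of the weak convergence topologies) to ℝ given by μ ↦ ∫ x, f x ∂(Measure.pi (fun i => ↑(μ i))) is continuous. -/
open MeasureTheory

/-- **Joint continuity of the mixed extension.**
For a finite family of nonempty compact metric spaces and a continuous function `f` on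
their product, the expected value of `f` under the product of probability measures is
jointly continuous in the profile of measures (each `ProbabilityMeasure (X i)` carrying
the topology of weak convergence). -/
theorem continuous_integral_pi_probabilityMeasure
    (ι : Type*) [Fintype ι] (X : ι → Type*)
    [∀ i, MetricSpace (X i)] [∀ i, CompactSpace (X i)] [∀ i, Nonempty (X i)]
    [∀ i, MeasurableSpace (X i)] [∀ i, BorelSpace (X i)]
    (f : (Π i, X i) → ℝ) (hf : Continuous f) :
    Continuous (fun μ : Π i, ProbabilityMeasure (X i) =>
      ∫ x, f x ∂(Measure.pi (fun i => (μ i : Measure (X i))))) := by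
  rw [continuous_iff_continuousAt]
  intro μ
  have h : Filter.Tendsto (fun μ : Π i, ProbabilityMeasure (X i) => ProbabilityMeasure.pi μ)
      (nhds μ) (nhds (ProbabilityMeasure.pi μ)) :=
    (ProbabilityMeasure.continuous_pi (α := X)).tendsto μ
  rw [ProbabilityMeasure.tendsto_iff_forall_integral_tendsto] at h
  exact h (BoundedContinuousFunction.mkOfCompact ⟨f, hf⟩)
end
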